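/- Let G = (V,E) be a cubic graph on n vertices with no connected component whose induced subgraph is isomorphic to K4. Let D be the set of all 4-element vertex subsets of V inducing a diamond, and let T be the set of all 3-element vertex subsets of V inducing a triangle and not contained in any member of D. Then there exists a partition 𝒫 of V with d(𝒫) ≥ (5/4)·|D| + |T| + (1/4)·(n − 3·|T| − 4·|D| − n/4) = (1/4)·|D| + (1/4)·|T| + (3/16)·n; consequently, every partition 𝒬 of V satisfies d(𝒬) ≤ (4/3)·d(𝒫). -/

import Mathlib

open Finset

/-- The number of edges of `G` with both endpoints in `S`. -/
noncomputable def edgesIn {V : Type*} (G : SimpleGraph V) (S : Finset V) : ℕ :=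
  Set.ncard {e : Sym2 V | e ∈ G.edgeSet ∧ ∀ v ∈ e, v ∈ S}

/-- The density of the set `S` of vertices in `G`: `|E(S)|/|S|`. -/
noncomputable def density {V : Type*} (G : SimpleGraph V) (S : Finset V) : ℚ :=
  (edgesIn G S : ℚ) / (S.card : ℚ)

/-- The density of a partition: the sum of the densities of its parts. -/
noncomputable def partDensity {V : Type*} [DecidableEq V] (G : SimpleGraph V) {s : Finset V}
    (P : Finpartition s) : ℚ :=
  ∑ p ∈ P.parts, density G p

/-- `S` is the vertex set of a connected component of `G` inducing a `K₄`:
it has 4 vertices, is a clique, and is closed under adjacency. -/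
def IsK4Component {V : Type*} (G : SimpleGraph V) (S : Finset V) : Prop :=
  S.card = 4 ∧ (∀ u ∈ S, ∀ v ∈ S, u ≠ v → G.Adj u v) ∧ (∀ u ∈ S, ∀ v, G.Adj u v → v ∈ S)

/-- The diamond graph: `K₄` minus the edge `{0,1}`. -/
def diamondGraph : SimpleGraph (Fin 4) :=
  SimpleGraph.fromEdgeSet {s(0, 2), s(0, 3), s(1, 2), s(1, 3), s(2, 3)}

/-!
Call the diamonds and the triangles lying in no diamond *blocks*. In a cubic graph without `K₄` two
triangles sharing a vertex share an edge, so distinct blocks are disjoint and every triangle lies in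
a block.

Lower bound. Let `R` be the set of vertices in no block. A vertex of a block has at most one
neighbour in `R`, and every component `C` of `G - Z` satisfies `4 ≤ |C| + e(C, Z)`. Hence if `Z`
contains all blocks, `G - Z` has at most `(n + 2 |Z ∩ R|) / 4` components, and the Tutte–Berge
formula yields a matching within `R` that misses at most `n / 4` of its vertices. The partition into
blocks, matching edges and leftover vertices has the required density, since diamonds, triangles and
edges have densities `5 / 4`, `1` and `1 / 2`.

Upper bound. By Turán's theorem a triangle-free part `S` has density at most `|S| / 4`, and any
other part has density at most `|S| / 4 + 1 / 3`. Two disjoint triangles do not fit into one block,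
so the parts containing a triangle inject into the blocks and every partition has density at most
`n / 4 + (|D| + |T|) / 3`, which is `4 / 3` times the lower bound.
-/

section OddComponents

variable {V W : Type*}

theorem ncard_oddComponents_congr {G : SimpleGraph V} {H : SimpleGraph W} (φ : G ≃g H) :
    G.oddComponents.ncard = H.oddComponents.ncard := by
  have supp_ncard (c : G.ConnectedComponent) :
      c.supp.ncard = (φ.connectedComponentEquiv c).supp.ncard :=
    Nat.card_congr (SimpleGraph.ConnectedComponent.isoEquivSupp φ c)
  have image_eq : φ.connectedComponentEquiv '' G.oddComponents = H.oddComponents := by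
    ext c
    obtain ⟨c, rfl⟩ := φ.connectedComponentEquiv.surjective c
    rw [φ.connectedComponentEquiv.injective.mem_set_image]
    simp only [Set.mem_ofPred_eq, supp_ncard]
  rw [← image_eq, Set.ncard_image_of_injective _ φ.connectedComponentEquiv.injective]

/-- The number of odd components of `G - U`, the quantity compared with `|U|` in Tutte's condition
and in the Tutte–Berge formula. -/
noncomputable def oddComponentCount (G : SimpleGraph V) (U : Set V) : ℕ :=
  (G.induce Uᶜ).oddComponents.ncard

theorem isTutteViolator_iff_lt_oddComponentCount {G : SimpleGraph V} {U : Set V} :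
    G.IsTutteViolator U ↔ U.ncard < oddComponentCount G U := by
  have verts_eq : ((⊤ : G.Subgraph).deleteVerts U).verts = Uᶜ := by
    simp [Set.compl_eq_univ_sdiff]
  let φ : ((⊤ : G.Subgraph).deleteVerts U).coe ≃g G.induce Uᶜ :=
    { toEquiv := Equiv.setCongr verts_eq
      map_rel_iff' := by
        rintro ⟨a, ha⟩ ⟨b, hb⟩
        simp only [verts_eq, Set.mem_compl_iff] at ha hb
        simp [ha, hb] }
  rw [SimpleGraph.IsTutteViolator, ncard_oddComponents_congr φ, oddComponentCount]

theorem oddComponentCount_preimage {G : SimpleGraph V} {H : SimpleGraph W} (f : G ↪g H)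
    {U : Set W} (hU : Uᶜ ⊆ Set.range f) :
    oddComponentCount G (f ⁻¹' U) = oddComponentCount H U := by
  let g : ↥(f ⁻¹' U)ᶜ → ↥Uᶜ := fun x => ⟨f x, x.2⟩
  have g_bijective : Function.Bijective g := by
    refine ⟨fun x y hxy => Subtype.ext (f.injective (congrArg Subtype.val hxy)), ?_⟩
    rintro ⟨y, hy⟩
    obtain ⟨x, rfl⟩ := hU hy
    exact ⟨⟨x, hy⟩, rfl⟩
  exact ncard_oddComponents_congr
    { toEquiv := Equiv.ofBijective g g_bijective, map_rel_iff' := f.map_adj_iff }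

theorem odd_oddComponentCount_iff [Finite V] (G : SimpleGraph V) (U : Set V) :
    Odd (oddComponentCount G U) ↔ Odd (Nat.card V + U.ncard) := by
  rw [oddComponentCount, SimpleGraph.odd_ncard_oddComponents, Nat.card_coe_set_eq,
    ← Set.ncard_add_ncard_compl U]
  grind

theorem oddComponentCount_le_one {G : SimpleGraph V} {U : Set V} {v : V} (hv : v ∉ U)
    (hadj : ∀ w, w ≠ v → G.Adj w v) : oddComponentCount G U ≤ 1 := by
  let v' : ↥Uᶜ := ⟨v, hv⟩
  have mk_eq (w : ↥Uᶜ) :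
      (G.induce Uᶜ).connectedComponentMk w = (G.induce Uᶜ).connectedComponentMk v' := by
    by_cases hwv : w = v'
    · rw [hwv]
    · exact SimpleGraph.ConnectedComponent.connectedComponentMk_eq_of_adj
        (hadj w fun h => hwv (Subtype.ext h))
  have : Subsingleton (G.induce Uᶜ).ConnectedComponent := by
    refine ⟨fun c d => ?_⟩
    induction c using SimpleGraph.ConnectedComponent.ind
    induction d using SimpleGraph.ConnectedComponent.ind
    exact (mk_eq _).trans (mk_eq _).symm
  exact Set.ncard_le_one_iff_subsingleton.2 Set.subsingleton_of_subsingleton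

end OddComponents

section TutteBerge

variable {V W : Type*} {G : SimpleGraph V}

/-- `G` together with extra vertices `W` adjacent to each other and to everything else. In the
Tutte–Berge formula these absorb the vertices left uncovered by a matching of `G`. -/
def addUniversalVerts (G : SimpleGraph V) (W : Type*) : SimpleGraph (V ⊕ W) :=
  (Gᶜ ⊕g (⊥ : SimpleGraph W))ᶜ

theorem addUniversalVerts_adj_inl {v w : V} :
    (addUniversalVerts G W).Adj (.inl v) (.inl w) ↔ G.Adj v w := by
  have := G.ne_of_adj (a := v) (b := w)
  simp only [addUniversalVerts, SimpleGraph.compl_adj, SimpleGraph.sum_adj]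
  grind

theorem addUniversalVerts_adj_inr {x : V ⊕ W} {w : W} (hx : x ≠ .inr w) :
    (addUniversalVerts G W).Adj x (.inr w) := by
  cases x <;> simp_all [addUniversalVerts]

theorem exists_isPerfectMatching_addUniversalVerts [Finite V] {k : ℕ}
    (heven : Even (Nat.card V + k)) (hU : ∀ U, oddComponentCount G U ≤ U.ncard + k) :
    ∃ M : (addUniversalVerts G (Fin k)).Subgraph, M.IsPerfectMatching := by
  refine SimpleGraph.tutte.2 fun U hviol => ?_
  rw [isTutteViolator_iff_lt_oddComponentCount] at hviol
  by_cases hinr : ∃ i : Fin k, .inr i ∉ U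
  · obtain ⟨i, hi⟩ := hinr
    have hle := oddComponentCount_le_one hi fun _ => addUniversalVerts_adj_inr (G := G)
    have hodd := odd_oddComponentCount_iff (addUniversalVerts G (Fin k)) U
    rw [show oddComponentCount (addUniversalVerts G (Fin k)) U = 1 by lia,
      show U.ncard = 0 by lia] at hodd
    simp only [Nat.card_sum, Nat.card_fin, odd_one, add_zero, true_iff] at hodd
    exact Nat.not_odd_iff_even.2 heven hodd
  · push Not at hinr
    let f : G ↪g addUniversalVerts G (Fin k) :=
      ⟨Function.Embedding.inl, addUniversalVerts_adj_inl⟩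
    have hcompl : Uᶜ ⊆ Set.range f := by
      rintro (v | i) hx
      · exact ⟨v, rfl⟩
      · exact absurd (hinr i) hx
    have hncard : (Sum.inl ⁻¹' U).ncard + k = U.ncard := by
      have hsplit : Sum.inl '' (Sum.inl ⁻¹' U) ∪ Set.range Sum.inr = U := by
        ext (v | i) <;> simp [hinr]
      have hdisj : Disjoint (Sum.inl '' (Sum.inl ⁻¹' U)) (Set.range (Sum.inr (β := Fin k))) :=
        Set.isCompl_range_inl_range_inr.disjoint.mono_left (Set.image_subset_range _ _)
      conv_rhs => rw [← hsplit, Set.ncard_union_eq hdisj,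
        Set.ncard_image_of_injective _ Sum.inl_injective,
        Set.ncard_range_of_injective Sum.inr_injective, Nat.card_fin]
    rw [← oddComponentCount_preimage f hcompl, ← hncard] at hviol
    exact hviol.not_ge (hU _)

theorem exists_isMatching_of_isPerfectMatching_addUniversalVerts [Finite V] [Finite W]
    {M : (addUniversalVerts G W).Subgraph} (hM : M.IsPerfectMatching) :
    ∃ M' : G.Subgraph, M'.IsMatching ∧ Nat.card V ≤ M'.verts.ncard + Nat.card W := by
  choose mate hmate mate_unique using SimpleGraph.Subgraph.isPerfectMatching_iff.1 hM
  have mate_mate x : mate (mate x) = x := (mate_unique _ _ (hmate x).symm).symm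
  have mate_injective : mate.Injective := Function.LeftInverse.injective mate_mate
  let M' : G.Subgraph :=
    { verts := {v | ∃ w, mate (.inl v) = .inl w}
      Adj v w := mate (.inl v) = .inl w
      adj_sub {v w} h := addUniversalVerts_adj_inl.1 (h ▸ (hmate (.inl v)).adj_sub)
      edge_vert h := ⟨_, h⟩
      symm := ⟨fun v w h => by rw [← h, mate_mate]⟩ }
  have hM' : M'.IsMatching := fun v ⟨w, hw⟩ =>
    ⟨w, hw, fun w' hw' => Sum.inl_injective (Eq.trans (Eq.symm hw') hw)⟩
  have hsub : (mate ∘ Sum.inl) '' M'.vertsᶜ ⊆ Set.range Sum.inr := by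
    rintro _ ⟨v, hv, rfl⟩
    rcases h : mate (.inl v) with w | w
    · exact absurd ⟨w, h⟩ hv
    · exact ⟨w, h.symm⟩
  have hcompl : M'.vertsᶜ.ncard ≤ Nat.card W := by
    rw [← Set.ncard_image_of_injective _ (mate_injective.comp Sum.inl_injective),
      ← Set.ncard_range_of_injective (Sum.inr_injective (α := V))]
    exact Set.ncard_le_ncard hsub
  have := Set.ncard_add_ncard_compl M'.verts
  exact ⟨M', hM', by lia⟩

theorem exists_isMatching_of_oddComponentCount_le [Finite V] {k : ℕ}
    (hU : ∀ U, oddComponentCount G U ≤ U.ncard + k) :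
    ∃ M : G.Subgraph, M.IsMatching ∧ Nat.card V ≤ M.verts.ncard + k := by
  have of_even {j : ℕ} (hj : Even (Nat.card V + j))
      (hU : ∀ U, oddComponentCount G U ≤ U.ncard + j) :
      ∃ M : G.Subgraph, M.IsMatching ∧ Nat.card V ≤ M.verts.ncard + j := by
    obtain ⟨M, hM⟩ := exists_isPerfectMatching_addUniversalVerts hj hU
    simpa using exists_isMatching_of_isPerfectMatching_addUniversalVerts hM
  rcases Nat.even_or_odd (Nat.card V + k) with heven | hodd
  · exact of_even heven hU
  -- The two sides of `hU` have opposite parity, so the bound also holds for `k - 1`.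
  · have hlt U : oddComponentCount G U < U.ncard + k := by
      have := odd_oddComponentCount_iff G U
      have := hU U
      grind
    obtain ⟨j, rfl⟩ : ∃ j, k = j + 1 :=
      Nat.exists_eq_add_one.2 (by simpa using Nat.zero_lt_of_lt (hlt ∅))
    obtain ⟨M, hM, hcard⟩ := of_even (j := j) (by grind) fun U => by grind
    exact ⟨M, hM, by lia⟩

theorem exists_isMatching_subset_of_oddComponentCount_le [Finite V] {R : Set V} {k : ℕ}
    (hZ : ∀ Z, Rᶜ ⊆ Z → oddComponentCount G Z ≤ (Z ∩ R).ncard + k) :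
    ∃ M : G.Subgraph, M.IsMatching ∧ M.verts ⊆ R ∧ R.ncard ≤ M.verts.ncard + k := by
  let f : G.induce R ↪g G := SimpleGraph.Embedding.induce R
  have hU U : oddComponentCount (G.induce R) U ≤ U.ncard + k := by
    let Z : Set V := Rᶜ ∪ Subtype.val '' U
    have hpreimage : f ⁻¹' Z = U := by
      ext v
      simp [f, Z]
    have hinter : Z ∩ R = Subtype.val '' U := by
      simp [Z, Set.union_inter_distrib_right]
    have hrange : Zᶜ ⊆ Set.range f := fun v hv => ⟨⟨v, by grind⟩, rfl⟩
    rw [← hpreimage, oddComponentCount_preimage f hrange, hpreimage,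
      ← Set.ncard_image_of_injective U Subtype.val_injective, ← hinter]
    exact hZ Z Set.subset_union_left
  obtain ⟨M, hM, hcard⟩ := exists_isMatching_of_oddComponentCount_le hU
  refine ⟨M.map f.toHom, hM.map f.toHom f.injective, ?_, ?_⟩
  · rintro _ ⟨v, -, rfl⟩
    exact v.2
  · rwa [SimpleGraph.Subgraph.map_verts,
      Set.ncard_image_of_injective _ (f := f.toHom) f.injective]

theorem exists_pairwiseDisjoint_edges_of_isMatching [Finite V] {M : G.Subgraph}
    (hM : M.IsMatching) :
    ∃ E : Finset (Finset V), (∀ e ∈ E, G.IsNClique 2 e ∧ ↑e ⊆ M.verts) ∧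
      (E : Set (Finset V)).PairwiseDisjoint id ∧ 2 * #E = M.verts.ncard := by
  classical
  have := Fintype.ofFinite V
  let E : Finset (Finset V) := {e | ∃ v w, M.Adj v w ∧ e = {v, w}}
  have mem_E {e} : e ∈ E ↔ ∃ v w, M.Adj v w ∧ e = {v, w} := by simp [E]
  have exists_mate {e} (he : e ∈ E) {v} (hv : v ∈ e) : ∃ w, M.Adj v w ∧ e = {v, w} := by
    obtain ⟨v', w, hadj, rfl⟩ := mem_E.1 he
    rcases mem_insert.1 hv with rfl | hv
    · exact ⟨w, hadj, rfl⟩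
    · obtain rfl := mem_singleton.1 hv
      exact ⟨v', hadj.symm, pair_comm _ _⟩
  have hedge : ∀ e ∈ E, G.IsNClique 2 e ∧ ↑e ⊆ M.verts := by
    intro e he
    obtain ⟨v, w, hvw, rfl⟩ := mem_E.1 he
    refine ⟨⟨?_, card_pair hvw.ne⟩, ?_⟩
    · simpa [SimpleGraph.isClique_pair] using fun _ => hvw.adj_sub
    · simp [Set.pair_subset_iff, hvw.fst_mem, hvw.snd_mem]
  have hdisj : (E : Set (Finset V)).PairwiseDisjoint id := by
    intro e he f hf hne
    refine disjoint_left.2 fun v hve hvf => hne ?_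
    obtain ⟨w, hw, rfl⟩ := exists_mate he hve
    obtain ⟨w', hw', rfl⟩ := exists_mate hf hvf
    rw [hM.eq_of_adj_left hw hw']
  have hunion : ((E.biUnion id : Finset V) : Set V) = M.verts := by
    ext v
    simp only [coe_biUnion, Set.mem_iUnion, id, mem_coe]
    refine ⟨fun ⟨e, he, hv⟩ => (hedge e he).2 hv, fun hv => ?_⟩
    obtain ⟨w, hvw, -⟩ := hM hv
    exact ⟨{v, w}, mem_E.2 ⟨v, w, hvw, rfl⟩, mem_insert_self _ _⟩
  refine ⟨E, hedge, hdisj, ?_⟩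
  rw [← hunion, Set.ncard_coe_finset, card_biUnion hdisj, mul_comm]
  exact (sum_const_nat fun e he => (hedge e he).1.card_eq).symm

end TutteBerge

section RegularGraph

variable {V : Type*} [Fintype V] {G : SimpleGraph V}

open Classical in
theorem ncard_oddComponents_mul_le_sum {m : ℕ} {f : V → ℕ}
    (hf : ∀ c : G.ConnectedComponent, m ≤ ∑ v with G.connectedComponentMk v = c, f v) :
    G.oddComponents.ncard * m ≤ ∑ v, f v :=
  calc G.oddComponents.ncard * m ≤ Nat.card G.ConnectedComponent * m := by
        gcongr
        exact Set.ncard_le_card _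
    _ = ∑ _c : G.ConnectedComponent, m := by simp
    _ ≤ ∑ c : G.ConnectedComponent, ∑ v with G.connectedComponentMk v = c, f v :=
        sum_le_sum fun c _ => hf c
    _ = ∑ v, f v := sum_fiberwise _ _ _

theorem oddComponentCount_mul_le_sum [DecidableEq V] [DecidableRel G.Adj] {d : ℕ}
    (hdeg : ∀ v, d ≤ G.degree v) (Z : Finset V) :
    oddComponentCount G Z * (d + 1) ≤ ∑ v ∈ Zᶜ, (1 + #{w ∈ Z | G.Adj v w}) := by
  classical
  rw [sum_subtype Zᶜ (p := (· ∈ (Z : Set V)ᶜ)) (by simp)]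
  refine ncard_oddComponents_mul_le_sum fun c => ?_
  induction c using SimpleGraph.ConnectedComponent.ind with | _ v
  let K := G.induce (Z : Set V)ᶜ
  let C : Finset ↥(Z : Set V)ᶜ := {w | K.connectedComponentMk w = K.connectedComponentMk v}
  have hv : v ∈ C := by simp [C]
  -- A neighbour of `v` outside `Z` lies in the component of `v`.
  have hsub : insert v.1 (G.neighborFinset v) ⊆
      C.map (Function.Embedding.subtype _) ∪ {w ∈ Z | G.Adj v w} := by
    intro w hw
    rcases mem_insert.1 hw with rfl | hw
    · exact mem_union_left _ (mem_map_of_mem _ hv)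
    rw [SimpleGraph.mem_neighborFinset] at hw
    by_cases hwZ : w ∈ Z
    · exact mem_union_right _ (mem_filter.2 ⟨hwZ, hw⟩)
    · let w' : ↥(Z : Set V)ᶜ := ⟨w, hwZ⟩
      have hadj : K.Adj w' v := hw.symm
      have hw' : w' ∈ C := mem_filter.2 ⟨mem_univ _,
        SimpleGraph.ConnectedComponent.connectedComponentMk_eq_of_adj hadj⟩
      exact mem_union_left _ (mem_map_of_mem (Function.Embedding.subtype _) hw')
  calc d + 1 ≤ #(insert v.1 (G.neighborFinset v)) := by
        rw [card_insert_of_notMem (by simp)]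
        exact Nat.succ_le_succ (hdeg v)
    _ ≤ #C + #{w ∈ Z | G.Adj v w} := (card_le_card hsub).trans
        ((card_union_le _ _).trans_eq (by rw [card_map]))
    _ ≤ #C + ∑ x ∈ C, #{w ∈ Z | G.Adj x w} := by
        gcongr
        exact single_le_sum (f := fun x : ↥(Z : Set V)ᶜ => #{w ∈ Z | G.Adj x w})
          (fun _ _ => Nat.zero_le _) hv
    _ = ∑ x ∈ C, (1 + #{w ∈ Z | G.Adj x w}) := by simp [sum_add_distrib]

theorem oddComponentCount_mul_le_card_add [DecidableEq V] [DecidableRel G.Adj] {d : ℕ}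
    (hreg : G.IsRegularOfDegree (d + 1)) {R Z : Finset V}
    (hR : ∀ v ∉ R, #{w ∈ R | G.Adj v w} ≤ 1) (hZ : Rᶜ ⊆ Z) :
    oddComponentCount G Z * (d + 2) ≤ Fintype.card V + d * #(Z ∩ R) := by
  have hdouble : ∑ v ∈ Zᶜ, #{w ∈ Z | G.Adj v w} = ∑ w ∈ Z, #{v ∈ Zᶜ | G.Adj v w} :=
    sum_card_bipartiteAbove_eq_sum_card_bipartiteBelow G.Adj
  have hinside : ∑ w ∈ Z ∩ R, #{v ∈ Zᶜ | G.Adj v w} ≤ #(Z ∩ R) * (d + 1) :=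
    sum_le_card_nsmul _ _ _ fun w _ => by
      rw [← hreg w, ← SimpleGraph.card_neighborFinset_eq_degree]
      exact card_le_card fun v hv => by simpa using (mem_filter.1 hv).2.symm
  have houtside : ∑ w ∈ Z \ R, #{v ∈ Zᶜ | G.Adj v w} ≤ #(Z \ R) * 1 :=
    sum_le_card_nsmul _ _ _ fun w hw => by
      refine (card_le_card fun v hv => ?_).trans (hR w (mem_sdiff.1 hw).2)
      obtain ⟨hvZ, hvw⟩ := mem_filter.1 hv
      have hvR : v ∈ R := by_contra fun h => mem_compl.1 hvZ (hZ (mem_compl.2 h))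
      exact mem_filter.2 ⟨hvR, hvw.symm⟩
  have hodd := oddComponentCount_mul_le_sum (fun v => (hreg v).ge) Z
  have := card_compl_add_card Z
  have := card_inter_add_card_sdiff Z R
  rw [sum_add_distrib, hdouble, ← sum_inter_add_sum_sdiff Z R, sum_const, smul_eq_mul] at hodd
  lia

theorem exists_pairwiseDisjoint_edges_subset [DecidableRel G.Adj] {d : ℕ}
    (hreg : G.IsRegularOfDegree (d + 1)) {R : Finset V} (hR : ∀ v ∉ R, #{w ∈ R | G.Adj v w} ≤ 1) :
    ∃ E : Finset (Finset V), (∀ e ∈ E, G.IsNClique 2 e ∧ e ⊆ R) ∧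
      (E : Set (Finset V)).PairwiseDisjoint id ∧ #R ≤ 2 * #E + Fintype.card V / (d + 2) := by
  classical
  have hZ (Z : Set V) (hRZ : (R : Set V)ᶜ ⊆ Z) :
      oddComponentCount G Z ≤ (Z ∩ R).ncard + Fintype.card V / (d + 2) := by
    lift Z to Finset V using Z.toFinite
    have := oddComponentCount_mul_le_card_add hreg hR (by simpa [← coe_subset] using hRZ)
    rw [← coe_inter, Set.ncard_coe_finset, ← Nat.mul_add_div (by positivity),
      Nat.le_div_iff_mul_le (by positivity)]
    lia
  obtain ⟨M, hM, hMR, hcard⟩ := exists_isMatching_subset_of_oddComponentCount_le hZ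
  obtain ⟨E, hE, hdisj, hEcard⟩ := exists_pairwiseDisjoint_edges_of_isMatching hM
  refine ⟨E, fun e he => ⟨(hE e he).1, by exact_mod_cast (hE e he).2.trans hMR⟩, hdisj, ?_⟩
  rwa [hEcard, ← Set.ncard_coe_finset]

end RegularGraph

section Density

variable {V : Type*} {G : SimpleGraph V} {S : Finset V}

theorem density_nonneg (G : SimpleGraph V) (S : Finset V) : 0 ≤ density G S := by
  unfold density
  positivity

theorem edgesIn_eq_card_edgeFinset_induce (G : SimpleGraph V) (S : Finset V)
    [Fintype (G.induce (S : Set V)).edgeSet] :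
    edgesIn G S = #(G.induce (S : Set V)).edgeFinset := by
  have himage : {e : Sym2 V | e ∈ G.edgeSet ∧ ∀ v ∈ e, v ∈ S} =
      Sym2.map Subtype.val '' (G.induce (S : Set V)).edgeSet := by
    ext e
    induction e with | _ v w
    constructor
    · rintro ⟨hadj, hmem⟩
      exact ⟨s(⟨v, hmem v (by simp)⟩, ⟨w, hmem w (by simp)⟩), hadj, rfl⟩
    · rintro ⟨e, he, hvw⟩
      induction e with | _ v' w'
      rw [← hvw]
      exact ⟨he, by simp⟩
  rw [edgesIn, himage, Set.ncard_image_of_injective _ (Sym2.map.injective Subtype.val_injective),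
    ← SimpleGraph.coe_edgeFinset, Set.ncard_coe_finset]

theorem density_eq_of_isNClique {r : ℕ} (hS : G.IsNClique (r + 1) S) : density G S = r / 2 := by
  classical
  have hedges : edgesIn G S = (r + 1).choose 2 := by
    rw [edgesIn_eq_card_edgeFinset_induce,
      SimpleGraph.edgeFinset_inj.2 (SimpleGraph.induce_eq_top.2 hS.isClique),
      SimpleGraph.card_edgeFinset_top_eq_card_choose_two]
    simp [hS.card_eq]
  rw [density, hedges, hS.card_eq, Nat.cast_choose_two]
  push_cast
  field_simp
  simp

theorem mul_density_le_of_cliqueFreeOn {r : ℕ} (hS : G.CliqueFreeOn S (r + 1)) :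
    2 * r * density G S ≤ (r - 1 : ℕ) * #S := by
  classical
  have hedges : 2 * r * edgesIn G S ≤ (r - 1) * #S ^ 2 := by
    have turan := ((G.cliqueFree_induce_iff S _).2 hS).card_edgeFinset_le.trans_eq
      SimpleGraph.card_edgeFinset_turanGraph.symm
    rw [edgesIn_eq_card_edgeFinset_induce]
    simpa using (Nat.mul_le_mul_left (2 * r) turan).trans
      SimpleGraph.mul_card_edgeFinset_turanGraph_le
  rw [density, ← mul_div_assoc]
  refine div_le_of_le_mul₀ (by positivity) (by positivity) ?_
  rw [mul_assoc _ (#S : ℚ), ← sq]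
  exact_mod_cast hedges

theorem two_mul_density_le_of_degree_le [Fintype V] [DecidableRel G.Adj] {d : ℕ}
    (hdeg : ∀ v, G.degree v ≤ d) (S : Finset V) : 2 * density G S ≤ d := by
  classical
  have degree_le (v : ↥(S : Set V)) : (G.induce (S : Set V)).degree v ≤ d := by
    refine (card_le_card_of_injOn Subtype.val (fun w hw => ?_)
      Subtype.val_injective.injOn).trans (hdeg v)
    simpa using hw
  have hedges : 2 * edgesIn G S ≤ d * #S := by
    rw [edgesIn_eq_card_edgeFinset_induce, ← SimpleGraph.sum_degrees_eq_twice_card_edges]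
    simpa [mul_comm] using sum_le_card_nsmul univ _ d fun v _ => degree_le v
  rw [density, ← mul_div_assoc]
  exact div_le_of_le_mul₀ (by positivity) (by positivity) (by exact_mod_cast hedges)

theorem density_le_card_div_four_of_cliqueFreeOn (hS : G.CliqueFreeOn S 3) :
    density G S ≤ #S / 4 := by
  have := mul_density_le_of_cliqueFreeOn (r := 2) hS
  norm_num at this
  linarith

theorem density_le_card_div_four_add [Fintype V] [DecidableRel G.Adj]
    (hdeg : ∀ v, G.degree v ≤ 3) (hG : G.CliqueFree 4) (S : Finset V) :
    density G S ≤ #S / 4 + 1 / 3 := by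
  rcases le_or_gt (#S) 4 with hcard | hcard
  · have turan := mul_density_le_of_cliqueFreeOn (r := 3) (hG.cliqueFreeOn (s := S))
    have : (#S : ℚ) ≤ 4 := by exact_mod_cast hcard
    norm_num at turan
    linarith
  · have handshake := two_mul_density_le_of_degree_le hdeg S
    have : (4 : ℚ) + 1 ≤ #S := by exact_mod_cast hcard
    norm_num at handshake
    linarith

end Density

section ClosedNeighborhood

variable {V : Type*} [Fintype V] {G : SimpleGraph V} [DecidableRel G.Adj]
  {X Y R S : Finset V} {v : V}

theorem card_le_degree_add_one_of_forall_adj (hS : ∀ w ∈ S, w ≠ v → G.Adj v w) :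
    #S ≤ G.degree v + 1 := by
  classical
  have hsub : S ⊆ insert v (G.neighborFinset v) := fun w hw => by
    simpa [or_iff_not_imp_left] using hS w hw
  exact (card_le_card hsub).trans (card_insert_le _ _)

theorem cliqueFree_four_of_not_exists_isK4Component (hdeg : ∀ v, G.degree v ≤ 3)
    (hK4 : ¬ ∃ S, IsK4Component G S) : G.CliqueFree 4 := by
  classical
  intro S hS
  refine hK4 ⟨S, hS.card_eq, hS.isClique, fun u hu v huv => ?_⟩
  by_contra hv
  have : #(insert v S) ≤ G.degree u + 1 := card_le_degree_add_one_of_forall_adj fun w hw hwu => by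
    rcases mem_insert.1 hw with rfl | hw
    · exact huv
    · exact hS.isClique hu hw hwu.symm
  rw [card_insert_of_notMem hv, hS.card_eq] at this
  linarith [hdeg u]

theorem add_le_card_inter_add_degree_of_isNClique [DecidableEq V] {r s : ℕ}
    (hX : G.IsNClique r X) (hY : G.IsNClique s Y) (hvX : v ∈ X) (hvY : v ∈ Y) :
    r + s ≤ #(X ∩ Y) + (G.degree v + 1) := by
  have hunion : #(X ∪ Y) ≤ G.degree v + 1 := card_le_degree_add_one_of_forall_adj fun w hw hwv => by
    rcases mem_union.1 hw with hw | hw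
    · exact hX.isClique hvX hw hwv.symm
    · exact hY.isClique hvY hw hwv.symm
  linarith [card_union_add_card_inter X Y, hX.card_eq, hY.card_eq]

theorem card_filter_adj_add_le_of_isNClique {r : ℕ} (hX : G.IsNClique r X) (hvX : v ∈ X)
    (hXR : Disjoint X R) : #{w ∈ R | G.Adj v w} + r ≤ G.degree v + 1 := by
  classical
  rw [← hX.card_eq, ← card_union_of_disjoint (hXR.symm.mono_left (filter_subset _ _))]
  refine card_le_degree_add_one_of_forall_adj fun w hw hwv => ?_
  rcases mem_union.1 hw with hw | hw
  · exact (mem_filter.1 hw).2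
  · exact hX.isClique hvX hw hwv.symm

end ClosedNeighborhood

section Diamond

variable {V : Type*} {G : SimpleGraph V} {S X Y : Finset V}

/-- `S` is the vertex set of an induced diamond of `G`. -/
def IsDiamond (G : SimpleGraph V) (S : Finset V) : Prop :=
  #S = 4 ∧ Nonempty (G.induce (S : Set V) ≃g diamondGraph)

instance : DecidableRel diamondGraph.Adj :=
  inferInstanceAs (DecidableRel (SimpleGraph.fromEdgeSet _).Adj)

theorem IsDiamond.density_eq (hS : IsDiamond G S) : density G S = 5 / 4 := by
  classical
  obtain ⟨hcard, ⟨φ⟩⟩ := hS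
  have hedges : edgesIn G S = 5 := by
    rw [edgesIn_eq_card_edgeFinset_induce, φ.card_edgeFinset_eq]
    decide
  rw [density, hedges, hcard]
  norm_num

theorem isDiamond_iff_exists_embedding :
    IsDiamond G S ↔ ∃ f : diamondGraph ↪g G, univ.map f.toEmbedding = S := by
  constructor
  · rintro ⟨-, ⟨φ⟩⟩
    refine ⟨(SimpleGraph.Embedding.induce _).comp φ.symm.toEmbedding, ?_⟩
    ext v
    simp only [mem_map, mem_univ, true_and]
    refine ⟨?_, fun hv => ⟨φ ⟨v, hv⟩, congrArg Subtype.val (φ.symm_apply_apply ⟨v, hv⟩)⟩⟩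
    rintro ⟨i, rfl⟩
    exact (φ.symm i).2
  · rintro ⟨f, rfl⟩
    refine ⟨by simp, ?_⟩
    rw [coe_map, coe_univ, Set.image_univ]
    exact ⟨f.isoInduceRange.symm⟩

theorem IsDiamond.exists_eq_union [DecidableEq V] (hS : IsDiamond G S) :
    ∃ X Y, G.IsNClique 3 X ∧ G.IsNClique 3 Y ∧ 1 < #(X ∩ Y) ∧ S = X ∪ Y := by
  obtain ⟨f, rfl⟩ := isDiamond_iff_exists_embedding.1 hS
  have isNClique_map {i j k : Fin 4} (h : diamondGraph.Adj i j ∧ diamondGraph.Adj i k ∧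
      diamondGraph.Adj j k) : G.IsNClique 3 (({i, j, k} : Finset (Fin 4)).map f.toEmbedding) := by
    simpa [SimpleGraph.is3Clique_triple_iff] using h
  refine ⟨_, _, isNClique_map (i := 0) (j := 2) (k := 3) (by decide),
    isNClique_map (i := 1) (j := 2) (k := 3) (by decide), ?_, ?_⟩
  · rw [← map_inter, card_map]
    decide
  · rw [← map_union]
    congr 1

theorem isDiamond_union [DecidableEq V] (hG : G.CliqueFree 4) (hX : G.IsNClique 3 X)
    (hY : G.IsNClique 3 Y) (hXY : 1 < #(X ∩ Y)) (hne : X ≠ Y) : IsDiamond G (X ∪ Y) := by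
  obtain ⟨c, hc, e, he, hce⟩ := one_lt_card.1 hXY
  rw [mem_inter] at hc he
  obtain ⟨a, haX, haY⟩ := not_subset.1 fun h => hne <|
    eq_of_subset_of_card_le h (by rw [hX.card_eq, hY.card_eq])
  obtain ⟨b, hbY, hbX⟩ := not_subset.1 fun h => hne.symm <|
    eq_of_subset_of_card_le h (by rw [hX.card_eq, hY.card_eq])
  have hX_eq : {a, c, e} = X := eq_of_subset_of_card_le (by grind) (by grind [hX.card_eq])
  have hY_eq : {b, c, e} = Y := eq_of_subset_of_card_le (by grind) (by grind [hY.card_eq])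
  subst hX_eq hY_eq
  have hab : ¬ G.Adj a b := fun hab => by
    refine hG _ (hY.insert (a := a) fun w hw => ?_)
    rcases mem_insert.1 hw with rfl | hw
    · exact hab
    · exact hX.isClique (mem_insert_self _ _) (mem_insert_of_mem hw) (by grind)
  rw [SimpleGraph.is3Clique_triple_iff] at hX hY
  have adj_iff (i j : Fin 4) :
      G.Adj (![a, b, c, e] i) (![a, b, c, e] j) ↔ diamondGraph.Adj i j := by
    fin_cases i <;> fin_cases j <;>
      simp [diamondGraph, hX, hY, hab, G.adj_comm _ a, G.adj_comm _ b, G.adj_comm e c]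
  have hinj : Function.Injective ![a, b, c, e] := by
    have hne_ab : a ≠ b := by grind
    simp [Function.Injective, Fin.forall_fin_succ, hne_ab, hne_ab.symm, hce, hce.symm, hX.1.ne,
      hX.1.ne', hX.2.1.ne, hX.2.1.ne', hY.1.ne, hY.1.ne', hY.2.1.ne, hY.2.1.ne']
  refine isDiamond_iff_exists_embedding.2 ⟨⟨⟨![a, b, c, e], hinj⟩, adj_iff _ _⟩, ?_⟩
  have hrange : univ.map ⟨![a, b, c, e], hinj⟩ = {a, b, c, e} := by
    ext v
    simp [Fin.exists_fin_succ, eq_comm]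
  exact hrange.trans (by grind)

variable [Fintype V] [DecidableRel G.Adj]

theorem IsDiamond.subset_of_isNClique (hdeg : ∀ v, G.degree v ≤ 3) (hS : IsDiamond G S)
    (hX : G.IsNClique 3 X) (hXS : ¬ Disjoint X S) : X ⊆ S := by
  classical
  obtain ⟨Y, Z, hY, hZ, hYZ, rfl⟩ := hS.exists_eq_union
  wlog hXY : ¬ Disjoint X Y generalizing Y Z
  · rw [union_comm]
    refine this Z Y hZ hY ?_ ?_ ?_ ?_
    · rwa [inter_comm]
    · rwa [union_comm]
    · rwa [union_comm]
    · exact fun hXZ => hXS (disjoint_union_right.2 ⟨not_not.1 hXY, hXZ⟩)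
  obtain ⟨v, hvX, hvY⟩ := not_disjoint_iff.1 hXY
  have hYX : 1 < #(Y ∩ X) := by
    linarith [add_le_card_inter_add_degree_of_isNClique hY hX hvY hvX, hdeg v]
  obtain ⟨z, hz⟩ : ((Y ∩ X) ∩ (Y ∩ Z)).Nonempty :=
    inter_nonempty_of_card_lt_card_add_card inter_subset_left inter_subset_left
      (by rw [hY.card_eq]; lia)
  have hzS : #(X ∪ (Y ∪ Z)) ≤ G.degree z + 1 :=
    card_le_degree_add_one_of_forall_adj fun w hw hwz => by
      simp only [mem_inter, mem_union] at hz hw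
      rcases hw with hw | hw | hw
      · exact hX.isClique hz.1.2 hw hwz.symm
      · exact hY.isClique hz.1.1 hw hwz.symm
      · exact hZ.isClique hz.2.2 hw hwz.symm
  have hcard : #(X ∪ (Y ∪ Z)) ≤ #(Y ∪ Z) := by linarith [hS.1, hdeg z]
  exact union_eq_right.1 (eq_of_subset_of_card_le subset_union_right hcard).symm

theorem IsDiamond.eq_of_not_disjoint (hdeg : ∀ v, G.degree v ≤ 3) {S' : Finset V}
    (hS : IsDiamond G S) (hS' : IsDiamond G S') (hSS' : ¬ Disjoint S S') : S = S' := by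
  classical
  refine eq_of_subset_of_card_le ?_ (by rw [hS.1, hS'.1])
  obtain ⟨X, Y, hX, hY, hXY, rfl⟩ := hS.exists_eq_union
  obtain ⟨z, hz⟩ := card_pos.1 (Nat.zero_lt_of_lt hXY)
  rw [mem_inter] at hz
  have hzS' : z ∈ S' := by
    rw [disjoint_union_left, not_and_or] at hSS'
    rcases hSS' with hdisj | hdisj
    · exact hS'.subset_of_isNClique hdeg hX hdisj hz.1
    · exact hS'.subset_of_isNClique hdeg hY hdisj hz.2
  exact union_subset
    (hS'.subset_of_isNClique hdeg hX (not_disjoint_iff.2 ⟨z, hz.1, hzS'⟩))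
    (hS'.subset_of_isNClique hdeg hY (not_disjoint_iff.2 ⟨z, hz.2, hzS'⟩))

end Diamond

section Blocks

variable {V : Type*} {G : SimpleGraph V} {B X Y : Finset V} {v : V}

/-- `X` is the vertex set of a triangle of `G` that lies in no induced diamond. -/
def IsIsolatedTriangle (G : SimpleGraph V) (X : Finset V) : Prop :=
  G.IsNClique 3 X ∧ ∀ S, IsDiamond G S → ¬ X ⊆ S

/-- The blocks of `G` are its induced diamonds together with the triangles lying in none of them.
In a subcubic graph without `K₄` they are pairwise disjoint, and they cover all triangles. -/
def IsBlock (G : SimpleGraph V) (B : Finset V) : Prop :=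
  IsDiamond G B ∨ IsIsolatedTriangle G B

theorem IsBlock.card_le_four (hB : IsBlock G B) : #B ≤ 4 := by
  rcases hB with hB | hB
  · exact hB.1.le
  · rw [hB.1.card_eq]
    norm_num

theorem exists_isBlock_of_isNClique (hX : G.IsNClique 3 X) : ∃ B, IsBlock G B ∧ X ⊆ B := by
  by_cases hdiamond : ∃ S, IsDiamond G S ∧ X ⊆ S
  · obtain ⟨S, hS, hXS⟩ := hdiamond
    exact ⟨S, .inl hS, hXS⟩
  · exact ⟨X, .inr ⟨hX, fun S hS hXS => hdiamond ⟨S, hS, hXS⟩⟩, Subset.rfl⟩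

theorem IsBlock.exists_isNClique_of_mem (hB : IsBlock G B) (hv : v ∈ B) :
    ∃ X, G.IsNClique 3 X ∧ X ⊆ B ∧ v ∈ X := by
  classical
  rcases hB with hB | hB
  · obtain ⟨X, Y, hX, hY, -, rfl⟩ := hB.exists_eq_union
    rcases mem_union.1 hv with hv | hv
    · exact ⟨X, hX, subset_union_left, hv⟩
    · exact ⟨Y, hY, subset_union_right, hv⟩
  · exact ⟨B, hB.1, Subset.rfl, hv⟩

theorem IsBlock.not_disjoint_of_isNClique (hB : IsBlock G B) (hX : G.IsNClique 3 X)
    (hY : G.IsNClique 3 Y) (hXB : X ⊆ B) (hYB : Y ⊆ B) : ¬ Disjoint X Y := by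
  classical
  intro hXY
  have := card_le_card (union_subset hXB hYB)
  rw [card_union_of_disjoint hXY, hX.card_eq, hY.card_eq] at this
  linarith [hB.card_le_four]

variable [Fintype V] [DecidableRel G.Adj]

theorem IsIsolatedTriangle.eq_of_not_disjoint (hdeg : ∀ v, G.degree v ≤ 3) (hG : G.CliqueFree 4)
    (hX : IsIsolatedTriangle G X) (hY : IsIsolatedTriangle G Y) (hXY : ¬ Disjoint X Y) :
    X = Y := by
  classical
  obtain ⟨v, hvX, hvY⟩ := not_disjoint_iff.1 hXY
  by_contra hne
  have hinter : 1 < #(X ∩ Y) := by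
    linarith [add_le_card_inter_add_degree_of_isNClique hX.1 hY.1 hvX hvY, hdeg v]
  exact hX.2 _ (isDiamond_union hG hX.1 hY.1 hinter hne) subset_union_left

theorem IsDiamond.disjoint_isIsolatedTriangle (hdeg : ∀ v, G.degree v ≤ 3) (hB : IsDiamond G B)
    (hX : IsIsolatedTriangle G X) : Disjoint B X := by
  by_contra hBX
  exact hX.2 B hB (hB.subset_of_isNClique hdeg hX.1 fun hXB => hBX hXB.symm)

theorem IsBlock.disjoint_of_ne {B' : Finset V} (hdeg : ∀ v, G.degree v ≤ 3) (hG : G.CliqueFree 4)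
    (hB : IsBlock G B) (hB' : IsBlock G B') (hne : B ≠ B') : Disjoint B B' := by
  rcases hB with hB | hB <;> rcases hB' with hB' | hB'
  · exact not_imp_comm.1 (hB.eq_of_not_disjoint hdeg hB') hne
  · exact hB.disjoint_isIsolatedTriangle hdeg hB'
  · exact (hB'.disjoint_isIsolatedTriangle hdeg hB).symm
  · exact not_imp_comm.1 (hB.eq_of_not_disjoint hdeg hG hB') hne

theorem IsBlock.card_filter_adj_le_one {R : Finset V} (hdeg : ∀ v, G.degree v ≤ 3)
    (hB : IsBlock G B) (hv : v ∈ B) (hBR : Disjoint B R) : #{w ∈ R | G.Adj v w} ≤ 1 := by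
  obtain ⟨X, hX, hXB, hvX⟩ := hB.exists_isNClique_of_mem hv
  linarith [card_filter_adj_add_le_of_isNClique hX hvX (hBR.mono_left hXB), hdeg v]

end Blocks

section BlockFamilies

variable {V : Type*} [Fintype V] {G : SimpleGraph V}

open scoped Classical in
/-- The family of all induced diamonds of `G`, called `D` in the theorem. -/
noncomputable def diamonds (G : SimpleGraph V) : Finset (Finset V) :=
  {S | IsDiamond G S}

open scoped Classical in
/-- The family of all triangles of `G` lying in no induced diamond, called `T` in the theorem. -/
noncomputable def isolatedTriangles (G : SimpleGraph V) : Finset (Finset V) :=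
  {X | IsIsolatedTriangle G X}

theorem mem_diamonds {S : Finset V} : S ∈ diamonds G ↔ IsDiamond G S := by
  simp [diamonds]

theorem mem_isolatedTriangles {X : Finset V} :
    X ∈ isolatedTriangles G ↔ IsIsolatedTriangle G X := by
  simp [isolatedTriangles]

theorem disjoint_diamonds_isolatedTriangles : Disjoint (diamonds G) (isolatedTriangles G) :=
  disjoint_left.2 fun S hS hX =>
    (mem_isolatedTriangles.1 hX).2 S (mem_diamonds.1 hS) Subset.rfl

variable [DecidableEq V]

/-- The family of all blocks of `G`, see `IsBlock`. -/
noncomputable def blocks (G : SimpleGraph V) : Finset (Finset V) :=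
  diamonds G ∪ isolatedTriangles G

theorem mem_blocks {B : Finset V} : B ∈ blocks G ↔ IsBlock G B := by
  rw [blocks, mem_union, mem_diamonds, mem_isolatedTriangles, IsBlock]

theorem card_blocks : #(blocks G) = #(diamonds G) + #(isolatedTriangles G) :=
  card_union_of_disjoint disjoint_diamonds_isolatedTriangles

theorem sum_card_blocks : ∑ B ∈ blocks G, #B = 4 * #(diamonds G) + 3 * #(isolatedTriangles G) := by
  rw [blocks, sum_union disjoint_diamonds_isolatedTriangles,
    sum_congr rfl fun S hS => (mem_diamonds.1 hS).1,
    sum_congr rfl fun X hX => (mem_isolatedTriangles.1 hX).1.card_eq]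
  simp [mul_comm]

theorem sum_density_blocks :
    ∑ B ∈ blocks G, density G B = 5 / 4 * #(diamonds G) + #(isolatedTriangles G) := by
  rw [blocks, sum_union disjoint_diamonds_isolatedTriangles,
    sum_congr rfl fun S hS => (mem_diamonds.1 hS).density_eq,
    sum_congr rfl fun X hX => density_eq_of_isNClique (mem_isolatedTriangles.1 hX).1]
  simp [mul_comm]

variable [DecidableRel G.Adj]

theorem pairwiseDisjoint_blocks (hdeg : ∀ v, G.degree v ≤ 3) (hG : G.CliqueFree 4) :
    (blocks G : Set (Finset V)).PairwiseDisjoint id := fun _ hB _ hB' hne =>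
  (mem_blocks.1 hB).disjoint_of_ne hdeg hG (mem_blocks.1 hB') hne

end BlockFamilies

section PartitionDensity

variable {V : Type*} [Fintype V] [DecidableEq V] {G : SimpleGraph V}

theorem exists_finpartition_sum_density_le {F : Finset (Finset V)}
    (hF : (F : Set (Finset V)).PairwiseDisjoint id) :
    ∃ P : Finpartition (univ : Finset V), ∑ S ∈ F, density G S ≤ partDensity G P := by
  let P₀ := Finpartition.ofPairwiseDisjoint F hF
  refine ⟨P₀.extendOfLE (subset_univ _), ?_⟩
  -- The parts of `P₀` are the nonempty members of `F`, and `density G ∅ = 0 / 0 = 0`.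
  calc ∑ S ∈ F, density G S = ∑ S ∈ P₀.parts, density G S :=
        (sum_erase F (by simp [density])).symm
    _ ≤ _ := sum_le_sum_of_subset_of_nonneg (P₀.parts_subset_extendOfLE _)
        fun S _ _ => density_nonneg G S

theorem card_le_card_blocks_of_pairwiseDisjoint {F : Finset (Finset V)}
    (hF : (F : Set (Finset V)).PairwiseDisjoint id) (htriangle : ∀ S ∈ F, ¬ G.CliqueFreeOn S 3) :
    #F ≤ #(blocks G) := by
  have hblock : ∀ S ∈ F, ∃ B ∈ blocks G, ∃ X, G.IsNClique 3 X ∧ X ⊆ S ∧ X ⊆ B := by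
    intro S hS
    obtain ⟨X, hXS, hX⟩ : ∃ X : Finset V, (X : Set V) ⊆ S ∧ G.IsNClique 3 X := by
      simpa [SimpleGraph.CliqueFreeOn] using htriangle S hS
    obtain ⟨B, hB, hXB⟩ := exists_isBlock_of_isNClique hX
    exact ⟨B, mem_blocks.2 hB, X, hX, coe_subset.1 hXS, hXB⟩
  choose! B hB X hX hXS hXB using hblock
  refine card_le_card_of_injOn B hB fun S hS S' hS' hBB' => ?_
  by_contra hne
  refine (mem_blocks.1 (hB S hS)).not_disjoint_of_isNClique (hX S hS) (hX S' hS') (hXB S hS) ?_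
    ((hF hS hS' hne).mono (hXS S hS) (hXS S' hS'))
  exact hBB' ▸ hXB S' hS'

variable [DecidableRel G.Adj]

theorem exists_edges_compl_blocks (hreg : G.IsRegularOfDegree 3) :
    ∃ E : Finset (Finset V), (∀ e ∈ E, G.IsNClique 2 e ∧ Disjoint ((blocks G).biUnion id) e) ∧
      (E : Set (Finset V)).PairwiseDisjoint id ∧
      Fintype.card V ≤ #((blocks G).biUnion id) + 2 * #E + Fintype.card V / 4 := by
  obtain ⟨E, hE, hdisj, hcard⟩ := exists_pairwiseDisjoint_edges_subset hreg
    (R := ((blocks G).biUnion id)ᶜ) fun v hv => by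
      obtain ⟨B, hB, hvB⟩ := mem_biUnion.1 (notMem_compl.1 hv)
      exact (mem_blocks.1 hB).card_filter_adj_le_one (fun v => (hreg v).le) hvB
        (disjoint_compl_right.mono_left (subset_biUnion_of_mem id hB))
  refine ⟨E, fun e he => ⟨(hE e he).1, disjoint_compl_right.mono_right (hE e he).2⟩, hdisj, ?_⟩
  rw [card_compl] at hcard
  lia

theorem exists_le_partDensity (hreg : G.IsRegularOfDegree 3) (hG : G.CliqueFree 4) :
    ∃ P : Finpartition (univ : Finset V),
      (#(diamonds G) + #(isolatedTriangles G) : ℚ) / 4 + 3 / 16 * Fintype.card V ≤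
        partDensity G P := by
  have hblocks := pairwiseDisjoint_blocks (fun v => (hreg v).le) hG
  obtain ⟨E, hE, hE_disj, hcard⟩ := exists_edges_compl_blocks hreg
  have hcross : ∀ B ∈ blocks G, ∀ e ∈ E, Disjoint B e := fun B hB e he =>
    (hE e he).2.mono_left (subset_biUnion_of_mem id hB)
  have hne : Disjoint (blocks G) E := disjoint_left.2 fun e heB heE =>
    (card_pos.1 (by simp [(hE e heE).1.card_eq])).ne_empty (disjoint_self.1 (hcross e heB e heE))
  obtain ⟨P, hP⟩ := exists_finpartition_sum_density_le (G := G) (F := blocks G ∪ E) <| by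
    rw [coe_union]
    exact hblocks.union hE_disj fun B hB e he _ => hcross B hB e he
  refine ⟨P, le_trans ?_ hP⟩
  have hE_density : ∑ e ∈ E, density G e = #E / 2 := by
    rw [sum_congr rfl fun e he => density_eq_of_isNClique (hE e he).1]
    simp [div_eq_mul_inv]
  have hcover : Fintype.card V ≤ 4 * #(diamonds G) + 3 * #(isolatedTriangles G) + 2 * #E +
      Fintype.card V / 4 := by
    simpa only [card_biUnion hblocks, id_eq, sum_card_blocks] using hcard
  rw [sum_union hne, sum_density_blocks, hE_density]
  have hfloor : ((Fintype.card V / 4 : ℕ) : ℚ) ≤ Fintype.card V / 4 := Nat.cast_div_le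
  have hcover' := Nat.cast_le (α := ℚ).2 hcover
  push_cast at hcover'
  linarith

theorem partDensity_le (hdeg : ∀ v, G.degree v ≤ 3) (hG : G.CliqueFree 4)
    (Q : Finpartition (univ : Finset V)) :
    partDensity G Q ≤ Fintype.card V / 4 + #(blocks G) / 3 := by
  classical
  have hpart (S : Finset V) :
      density G S ≤ #S / 4 + if G.CliqueFreeOn S 3 then 0 else 1 / 3 := by
    split_ifs with hS
    · simpa using density_le_card_div_four_of_cliqueFreeOn hS
    · exact density_le_card_div_four_add hdeg hG S
  let F := Q.parts.filter fun S : Finset V => ¬ G.CliqueFreeOn S 3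
  have hF : #F ≤ #(blocks G) :=
    card_le_card_blocks_of_pairwiseDisjoint
      (Q.disjoint.subset (coe_subset.2 (filter_subset _ _))) fun S hS => (mem_filter.1 hS).2
  calc partDensity G Q
      ≤ ∑ S ∈ Q.parts, (#S / 4 + if G.CliqueFreeOn S 3 then 0 else 1 / 3 : ℚ) :=
        sum_le_sum fun S _ => hpart S
    _ = Fintype.card V / 4 + #F / 3 := by
        rw [sum_add_distrib, ← sum_div, ← Nat.cast_sum, Q.sum_card_parts, card_univ, sum_ite]
        simp [F, div_eq_mul_inv]
    _ ≤ Fintype.card V / 4 + #(blocks G) / 3 := by gcongr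

end PartitionDensity

theorem stmt10 {V : Type*} [Fintype V] [DecidableEq V] (G : SimpleGraph V) [DecidableRel G.Adj]
    (n : ℕ) (hn : Fintype.card V = n)
    (hcubic : ∀ v : V, G.degree v = 3)
    (hK4 : ¬ ∃ S : Finset V, IsK4Component G S)
    (D T : Set (Finset V))
    (hD : D = {S : Finset V | S.card = 4 ∧ Nonempty (G.induce (S : Set V) ≃g diamondGraph)})
    (hT : T = {S : Finset V | S.card = 3 ∧ (∀ u ∈ S, ∀ v ∈ S, u ≠ v → G.Adj u v) ∧
      ∀ S' ∈ D, ¬ S ⊆ S'}) :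
    ∃ P : Finpartition (univ : Finset V),
      (5 / 4) * (D.ncard : ℚ) + (T.ncard : ℚ) +
          (1 / 4) * ((n : ℚ) - 3 * (T.ncard : ℚ) - 4 * (D.ncard : ℚ) - (n : ℚ) / 4) ≤
        partDensity G P ∧
      ∀ Q : Finpartition (univ : Finset V), partDensity G Q ≤ (4 / 3) * partDensity G P := by
  have hreg : G.IsRegularOfDegree 3 := hcubic
  have hG := cliqueFree_four_of_not_exists_isK4Component (fun v => (hreg v).le) hK4
  have hD_eq : D = diamonds G := by
    ext S
    simp only [hD, Set.mem_ofPred_eq, mem_coe, mem_diamonds, IsDiamond]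
  have hT_eq : T = isolatedTriangles G := by
    ext X
    simp only [hT, hD_eq, Set.mem_ofPred_eq, mem_coe, mem_diamonds, mem_isolatedTriangles,
      IsIsolatedTriangle, SimpleGraph.isNClique_iff, and_comm (b := #X = 3), and_assoc]
    rfl
  simp only [hD_eq, hT_eq, Set.ncard_coe_finset, ← hn]
  obtain ⟨P, hP⟩ := exists_le_partDensity hreg hG
  refine ⟨P, by linarith, fun Q => ?_⟩
  have hQ := partDensity_le (fun v => (hreg v).le) hG Q
  rw [card_blocks] at hQ
  push_cast at hQ
  linarith
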